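/- arXiv:2209.05543 — 2 statements merged into one kernel-verified Lean document; each statement's English description precedes it below -/
import Mathlib

section
/- If τ : I → K₊ is three times Fréchet differentiable, then D³ Ñ(ι; η, η, η) = (6 P_{τ'}(η)³ + 3 P_{τ''}(η²) P_{τ'}(η) + 3 P_{τ'}(η) P_{τ''}(η²) + P_{τ'''}(η³)) Ñ(ι), in the notation P_{τ^{(k)}}(η^k) = P_{τ(ι)}(D^k τ(ι; η,…,η)). -/
open Set Filter Topology

section Resolvent

variable {K A : Type*} [NormedAddCommGroup K] [NormedSpace ℂ K] [NormedRing A] [NormedAlgebra ℂ A]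
  {P : K → K →L[ℂ] A} {DP : K → K → K →L[ℂ] A} {S : Set K}

/-- A pencil `P` with `D_τ P_τ(ξ)(η) = P_τ(η) P_τ(ξ)` satisfies the resolvent identity along
segments. -/
theorem one_sub_mul_eq_of_hasFDerivAt
    (hDP : ∀ τ ∈ S, ∀ ξ η : K, DP τ ξ η = P τ η * P τ ξ)
    (hP : ∀ τ ∈ S, ∀ ξ : K, HasFDerivAt (fun s => P s ξ) (DP τ ξ) τ)
    {τ v : K} (hseg : ∀ t ∈ Icc (0 : ℝ) 1, τ + t • v ∈ S) (ξ : K) :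
    (1 - P τ v) * P (τ + v) ξ = P τ ξ := by
  have hderiv : ∀ ζ : K, ∀ t ∈ Icc (0 : ℝ) 1,
      HasDerivAt (fun t : ℝ => P (τ + t • v) ζ) (P (τ + t • v) v * P (τ + t • v) ζ) t := by
    intro ζ t ht
    have hline : HasDerivAt (fun t : ℝ => τ + t • v) v t := by
      simpa using ((hasDerivAt_id t).smul_const v).const_add τ
    have := ((hP _ (hseg t ht) ζ).restrictScalars ℝ).comp_hasDerivAt t hline
    simpa [Function.comp_def, hDP _ (hseg t ht)] using this
  have hmul : ∀ ζ : K, ∀ t ∈ Icc (0 : ℝ) 1,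
      HasDerivAt (fun t : ℝ => (1 - t • P τ v) * P (τ + t • v) ζ)
        (((1 - t • P τ v) * P (τ + t • v) v - P τ v) * P (τ + t • v) ζ) t := by
    intro ζ t ht
    have hlin : HasDerivAt (fun t : ℝ => 1 - t • P τ v) (-P τ v) t := by
      simpa using ((hasDerivAt_id t).smul_const (P τ v)).const_sub 1
    refine (hlin.mul (hderiv ζ t ht)).congr_deriv ?_
    simp only [sub_mul, mul_assoc, one_mul, neg_mul]
    abel
  obtain ⟨C, hC⟩ := isCompact_Icc.exists_bound_of_continuousOn
    (fun t ht => (hderiv v t ht).continuousAt.continuousWithinAt :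
      ContinuousOn (fun t : ℝ => P (τ + t • v) v) (Icc (0 : ℝ) 1))
  have hv : ∀ t ∈ Icc (0 : ℝ) 1, (1 - t • P τ v) * P (τ + t • v) v - P τ v = 0 := by
    refine eq_zero_of_abs_deriv_le_mul_abs_self_of_eq_zero_right (K := C)
      (f' := fun t => ((1 - t • P τ v) * P (τ + t • v) v - P τ v) * P (τ + t • v) v)
      (fun t ht => ((hmul v t ht).sub_const _).continuousAt.continuousWithinAt)
      (fun t ht => ((hmul v t (Ico_subset_Icc_self ht)).sub_const _).hasDerivWithinAt)
      (by simp) ?_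
    intro t ht
    rw [mul_comm C]
    exact (norm_mul_le _ _).trans
      (mul_le_mul_of_nonneg_left (hC t (Ico_subset_Icc_self ht)) (norm_nonneg _))
  have hconst := constant_of_has_deriv_right_zero
    (f := fun t : ℝ => (1 - t • P τ v) * P (τ + t • v) ξ) (a := 0) (b := 1)
    (fun t ht => (hmul ξ t ht).continuousAt.continuousWithinAt)
    (fun t ht => by
      have := (hmul ξ t (Ico_subset_Icc_self ht)).hasDerivWithinAt (s := Ici t)
      rwa [hv t (Ico_subset_Icc_self ht), zero_mul] at this)
  simpa using hconst 1 (by simp)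

/-- Pointwise differentiability with the resolvent-type derivative makes `P` smooth in operator
norm. -/
theorem contDiffAt_of_hasFDerivAt_resolvent [CompleteSpace A] (hS : IsOpen S)
    (hDP : ∀ τ ∈ S, ∀ ξ η : K, DP τ ξ η = P τ η * P τ ξ)
    (hP : ∀ τ ∈ S, ∀ ξ : K, HasFDerivAt (fun s => P s ξ) (DP τ ξ) τ)
    {n : WithTop ℕ∞} {τ : K} (hτ : τ ∈ S) : ContDiffAt ℂ n P τ := by
  have hlin : ContDiff ℂ n (fun σ : K => 1 - P τ (σ - τ)) := by fun_prop
  have hinv : ContDiffAt ℂ n (fun σ : K => Ring.inverse (1 - P τ (σ - τ))) τ := by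
    refine ContDiffAt.comp τ (g := Ring.inverse) ?_ hlin.contDiffAt
    simpa using contDiffAt_ringInverse ℂ (1 : Aˣ)
  have hformula : ContDiffAt ℂ n
      (fun σ : K => (ContinuousLinearMap.mul ℂ A (Ring.inverse (1 - P τ (σ - τ)))).comp (P τ)) τ :=
    ((ContinuousLinearMap.mul ℂ A).contDiff.contDiffAt.comp τ hinv).clm_comp contDiffAt_const
  refine hformula.congr_of_eventuallyEq ?_
  obtain ⟨r, hr, hball⟩ := Metric.isOpen_iff.mp hS τ hτ
  have hunit : ∀ᶠ σ in 𝓝 τ, IsUnit (1 - P τ (σ - τ)) :=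
    hlin.continuous.continuousAt.eventually
      (Units.isOpen.mem_nhds (by simp : IsUnit (1 - P τ (τ - τ))))
  filter_upwards [hunit, Metric.ball_mem_nhds τ hr] with σ hσ hσr
  ext ξ
  have hid := one_sub_mul_eq_of_hasFDerivAt hDP hP (τ := τ) (v := σ - τ)
    (fun t ht => hball ((convex_ball τ r).add_smul_sub_mem (Metric.mem_ball_self hr) hσr ht)) ξ
  rw [add_sub_cancel] at hid
  rw [ContinuousLinearMap.comp_apply, ContinuousLinearMap.mul_apply', ← hid, ← mul_assoc,
    Ring.inverse_mul_cancel _ hσ, one_mul]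

end Resolvent

section IteratedLineDeriv

variable {E F : Type*} [NormedAddCommGroup E] [NormedSpace ℂ E]
  [NormedAddCommGroup F] [NormedSpace ℂ F]

theorem ContDiffAt.hasLineDerivAt_iteratedFDeriv {f : E → F} {x : E} {n : ℕ}
    (hf : ContDiffAt ℂ (n + 1 : ℕ) f x) (v : E) :
    HasLineDerivAt ℂ (fun y => iteratedFDeriv ℂ n f y fun _ => v)
      (iteratedFDeriv ℂ (n + 1) f x fun _ => v) x v := by
  have hd := hf.differentiableAt_iteratedFDeriv (m := n) (by exact_mod_cast n.lt_succ_self)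
  exact ((ContinuousMultilinearMap.apply ℂ (fun _ : Fin n => E) F
    fun _ => v).hasFDerivAt.comp x hd.hasFDerivAt).hasLineDerivAt v

theorem iteratedFDeriv_succ_const_eq_of_eqOn {f : E → F} {g : E → F} {g' : F} {x v : E} {n : ℕ}
    {s : Set E} (hs : IsOpen s) (hx : x ∈ s) (hf : ContDiffAt ℂ (n + 1 : ℕ) f x)
    (hfg : ∀ y ∈ s, (iteratedFDeriv ℂ n f y fun _ => v) = g y)
    (hg : HasLineDerivAt ℂ g g' x v) :
    (iteratedFDeriv ℂ (n + 1) f x fun _ => v) = g' :=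
  (hf.hasLineDerivAt_iteratedFDeriv v).unique
    (hg.congr_of_eventuallyEq (eventually_of_mem (hs.mem_nhds hx) hfg))

end IteratedLineDeriv


/-- The third-derivative formula of Lemma 2.5 (single direction η). -/
theorem stmt8
    {H : Type*} [NormedAddCommGroup H] [InnerProductSpace ℂ H] [CompleteSpace H]
    {X : Type*} [NormedAddCommGroup X] [InnerProductSpace ℂ X] [FiniteDimensional ℂ X]
    {K : Type*} [NormedAddCommGroup K] [NormedSpace ℂ K]
    {B : Type*} [NormedAddCommGroup B] [NormedSpace ℂ B]
    (N : K → X →L[ℂ] H) (P : K → K →L[ℂ] (H →L[ℂ] H))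
    (Kplus : Set K) (hKplus : IsOpen Kplus)
    -- the structure of the derivatives of N and P (Theorem 2.2 and Lemma 2.1)
    (DN : K → K →L[ℂ] (X →L[ℂ] H))
    (hDN : ∀ τ ∈ Kplus, ∀ ξ : K, DN τ ξ = (P τ ξ).comp (N τ))
    (hNderiv : ∀ τ ∈ Kplus, HasFDerivAt N (DN τ) τ)
    (DP : K → K → K →L[ℂ] (H →L[ℂ] H))
    (hDP : ∀ τ ∈ Kplus, ∀ ξ η : K, DP τ ξ η = (P τ η) * (P τ ξ))
    (hPderiv : ∀ τ ∈ Kplus, ∀ ξ : K, HasFDerivAt (fun s : K => P s ξ) (DP τ ξ) τ)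
    -- a twice continuously differentiable parametrization τ : I → K₊
    (I : Set B) (hI : IsOpen I) (τp : B → K) (hmaps : ∀ s ∈ I, τp s ∈ Kplus)
    (hτ : ContDiffOn ℂ 3 τp I)
    (ι : B) (hι : ι ∈ I) (η : B) :
    (iteratedFDeriv ℂ 3 (fun s : B => N (τp s)) ι) (fun _ => η) =
      (6 • (P (τp ι) (fderiv ℂ τp ι η) ^ 3) +
        3 • (P (τp ι) ((iteratedFDeriv ℂ 2 τp ι) fun _ => η) *
          P (τp ι) (fderiv ℂ τp ι η)) +
        3 • (P (τp ι) (fderiv ℂ τp ι η) *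
          P (τp ι) ((iteratedFDeriv ℂ 2 τp ι) fun _ => η)) +
        P (τp ι) ((iteratedFDeriv ℂ 3 τp ι) fun _ => η)).comp (N (τp ι)) := by
  have hPs : ∀ τ ∈ Kplus, ContDiffAt ℂ 3 P τ := fun τ hτ' =>
    contDiffAt_of_hasFDerivAt_resolvent hKplus hDP hPderiv hτ'
  have hPon : ContDiffOn ℂ 3 P Kplus := fun τ hτ' => (hPs τ hτ').contDiffWithinAt
  have hfderiv : ∀ τ ∈ Kplus, fderiv ℂ N τ =
      ((ContinuousLinearMap.compL ℂ X H H).flip (N τ)).comp (P τ) := by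
    intro τ hτ'
    rw [(hNderiv τ hτ').fderiv]
    ext1 ξ
    simp [hDN τ hτ']
  have hNstep : ∀ n : ℕ, n ≤ 3 → ContDiffOn ℂ n N Kplus := by
    intro n
    induction n with
    | zero =>
      intro _
      exact contDiffOn_zero.2 fun τ hτ' => (hNderiv τ hτ').continuousAt.continuousWithinAt
    | succ n ih =>
      intro hn
      push_cast
      refine (contDiffOn_succ_iff_fderiv_of_isOpen hKplus).2
        ⟨fun τ hτ' => (hNderiv τ hτ').differentiableAt.differentiableWithinAt, by simp, ?_⟩
      refine ContDiffOn.congr (ContDiffOn.clm_comp ?_ (hPon.of_le ?_)) hfderiv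
      · exact (ContinuousLinearMap.contDiff (F := (H →L[ℂ] H) →L[ℂ] X →L[ℂ] H)
          (ContinuousLinearMap.compL ℂ X H H).flip).comp_contDiffOn (ih (by omega))
      · exact_mod_cast (by omega : n ≤ 3)
  have hF : ∀ s ∈ I, ContDiffAt ℂ 3 (fun s => N (τp s)) s := fun s hs =>
    (((hNstep 3 le_rfl).comp hτ hmaps).contDiffAt (hI.mem_nhds hs))
  have hτs : ∀ s ∈ I, ContDiffAt ℂ 3 τp s := fun s hs => hτ.contDiffAt (hI.mem_nhds hs)
  have hτ1 : ∀ s ∈ I, HasLineDerivAt ℂ τp (fderiv ℂ τp s η) s η := fun s hs =>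
    ((hτs s hs).differentiableAt (by simp)).hasFDerivAt.hasLineDerivAt η
  have hτ2 : ∀ s ∈ I, HasLineDerivAt ℂ (fun s => fderiv ℂ τp s η)
      (iteratedFDeriv ℂ 2 τp s fun _ => η) s η := by
    intro s hs
    simpa using ((hτs s hs).of_le (by norm_num : ((1 + 1 : ℕ) : WithTop ℕ∞) ≤ 3)
      ).hasLineDerivAt_iteratedFDeriv η
  have hτ3 : ∀ s ∈ I, HasLineDerivAt ℂ (fun s => iteratedFDeriv ℂ 2 τp s fun _ => η)
      (iteratedFDeriv ℂ 3 τp s fun _ => η) s η := fun s hs =>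
    (hτs s hs).hasLineDerivAt_iteratedFDeriv (n := 2) η
  have hN1 : ∀ s ∈ I, HasLineDerivAt ℂ (fun s => N (τp s))
      ((P (τp s) (fderiv ℂ τp s η)).comp (N (τp s))) s η := by
    intro s hs
    have hd := (hNderiv (τp s) (hmaps s hs)).comp s
      ((hτs s hs).differentiableAt (by simp)).hasFDerivAt
    simpa [hDN _ (hmaps s hs), Function.comp_def] using hd.hasLineDerivAt η
  have hP1 : ∀ x : B → K, ∀ x' : K, ∀ s ∈ I, HasLineDerivAt ℂ x x' s η →
      HasLineDerivAt ℂ (fun s => P (τp s) (x s))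
        (P (τp s) (fderiv ℂ τp s η) * P (τp s) (x s) + P (τp s) x') s η := by
    intro x x' s hs hx
    have hPd := ((hPs _ (hmaps s hs)).differentiableAt (by simp)).hasFDerivAt
    have happ : ∀ ξ ζ : K, fderiv ℂ P (τp s) ζ ξ = P (τp s) ζ * P (τp s) ξ := by
      intro ξ ζ
      have h1 := (ContinuousLinearMap.apply ℂ (H →L[ℂ] H) ξ).hasFDerivAt.comp (τp s) hPd
      have h2 := h1.unique (hPderiv _ (hmaps s hs) ξ)
      rw [← hDP _ (hmaps s hs), ← h2]
      simp
    have hc := (hPd.comp s ((hτs s hs).differentiableAt (by simp)).hasFDerivAt).hasLineDerivAt η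
    have := HasDerivAt.clm_apply (𝕜 := ℂ) hc hx
    simpa [HasLineDerivAt, happ] using this
  have hcomp : ∀ a : B → H →L[ℂ] H, ∀ a' : H →L[ℂ] H, ∀ s ∈ I, HasLineDerivAt ℂ a a' s η →
      HasLineDerivAt ℂ (fun s => (a s).comp (N (τp s)))
        ((a' + a s * P (τp s) (fderiv ℂ τp s η)).comp (N (τp s))) s η := by
    intro a a' s hs ha
    have := HasDerivAt.clm_comp (𝕜 := ℂ) ha (hN1 s hs)
    simpa [HasLineDerivAt, ContinuousLinearMap.add_comp, ContinuousLinearMap.mul_def,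
      ContinuousLinearMap.comp_assoc] using this
  have e1 : ∀ s ∈ I, (iteratedFDeriv ℂ 1 (fun s => N (τp s)) s fun _ => η) =
      (P (τp s) (fderiv ℂ τp s η)).comp (N (τp s)) := fun s hs =>
    iteratedFDeriv_succ_const_eq_of_eqOn (n := 0) hI hs ((hF s hs).of_le (by norm_num))
      (fun _ _ => iteratedFDeriv_zero_apply _) (hN1 s hs)
  have e2 : ∀ s ∈ I, (iteratedFDeriv ℂ 2 (fun s => N (τp s)) s fun _ => η) =
      (P (τp s) (fderiv ℂ τp s η) * P (τp s) (fderiv ℂ τp s η) +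
        P (τp s) (iteratedFDeriv ℂ 2 τp s fun _ => η) +
        P (τp s) (fderiv ℂ τp s η) * P (τp s) (fderiv ℂ τp s η)).comp (N (τp s)) := fun s hs =>
    iteratedFDeriv_succ_const_eq_of_eqOn (n := 1) hI hs ((hF s hs).of_le (by norm_num)) e1
      (hcomp _ _ s hs (hP1 _ _ s hs (hτ2 s hs)))
  have ha := hP1 _ _ ι hι (hτ2 ι hι)
  have hb := hP1 _ _ ι hι (hτ3 ι hι)
  have haa := HasDerivAt.mul (𝕜 := ℂ) ha ha
  have hsum := HasDerivAt.add (HasDerivAt.add haa hb) haa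
  refine (iteratedFDeriv_succ_const_eq_of_eqOn (n := 2) hI hι (hF ι hι) e2
    (hcomp _ _ ι hι hsum)).trans ?_
  congr 1
  simp only [zero_smul, add_zero]
  noncomm_ring
end

section
/- In the same setting, define η₃ := −M[ (1/2) D³Λ̃(0; η₁,η₁,η₁)/3!·6-term-normalization + D²Λ̃(0; η₁, η₂) ], more precisely η₃ = −(1/6) M D³Λ̃(0; η₁³) − M D²Λ̃(0; η₁, η₂) (using symmetry of D²Λ̃). Then η₃ = O(‖υ‖³) and ‖η₁ + η₂ + η₃ − υ‖_B ≤ C‖υ‖_B⁴ for small υ ∈ W. -/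
open Asymptotics Filter Topology

/-- Third-order Taylor expansion with a fourth-order remainder for a map that is `C⁴` at `x`. -/
theorem ContDiffAt.taylor_three_isBigO {E G : Type*} [NormedAddCommGroup E] [NormedSpace ℝ E]
    [NormedAddCommGroup G] [NormedSpace ℝ G] [CompleteSpace G] {f : E → G} {x : E}
    (hf : ContDiffAt ℝ 4 f x) :
    (fun y : E ↦ f (x + y) - f x - fderiv ℝ f x y
      - (1 / 2 : ℝ) • iteratedFDeriv ℝ 2 f x (fun _ ↦ y)
      - (1 / 6 : ℝ) • iteratedFDeriv ℝ 3 f x (fun _ ↦ y)) =O[𝓝 0] fun y ↦ ‖y‖ ^ 4 := by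
  have hcont : ContinuousAt (iteratedFDeriv ℝ 4 f) x :=
    hf.continuousAt_iteratedFDeriv (k := 4) le_rfl
  have hbound : ∀ᶠ z in 𝓝 x, ‖iteratedFDeriv ℝ 4 f z‖ < ‖iteratedFDeriv ℝ 4 f x‖ + 1 :=
    hcont.norm.eventually_lt continuousAt_const (lt_add_one _)
  obtain ⟨ε, hε, hball⟩ := Metric.eventually_nhds_iff.1 (hbound.and (hf.eventually (by simp)))
  refine IsBigO.of_bound (‖iteratedFDeriv ℝ 4 f x‖ + 1)
    (Metric.eventually_nhds_iff.2 ⟨ε, hε, fun y hy ↦ ?_⟩)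
  have hseg : ∀ t ∈ Set.Icc (0 : ℝ) 1, Dist.dist (x + t • y) x < ε := fun t ht ↦ by
    rw [dist_eq_norm, add_sub_cancel_left, norm_smul, Real.norm_of_nonneg ht.1]
    rw [dist_zero_right] at hy
    exact (mul_le_of_le_one_left (norm_nonneg y) ht.2).trans_lt hy
  have key := map_add_eq_sum_add_integral_iteratedFDeriv (f := f) (x := x) (y := y) (n := 3)
    (fun t ht ↦ by
      convert (hball (hseg t ht)).2
      norm_num)
  simp only [Finset.sum_range_succ, Finset.sum_range_zero, iteratedFDeriv_zero_apply,
    iteratedFDeriv_one_apply, Nat.factorial] at key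
  have hrem : f (x + y) - f x - fderiv ℝ f x y
      - (1 / 2 : ℝ) • iteratedFDeriv ℝ 2 f x (fun _ ↦ y)
      - (1 / 6 : ℝ) • iteratedFDeriv ℝ 3 f x (fun _ ↦ y) =
      (1 / 6 : ℝ) • ∫ t in (0 : ℝ)..1,
        (1 - t) ^ 3 • iteratedFDeriv ℝ 4 f (x + t • y) (fun _ ↦ y) := by
    rw [key]
    norm_num
    abel
  have hint : ‖∫ t in (0 : ℝ)..1, (1 - t) ^ 3 • iteratedFDeriv ℝ 4 f (x + t • y) (fun _ ↦ y)‖ ≤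
      (‖iteratedFDeriv ℝ 4 f x‖ + 1) * ‖y‖ ^ 4 * |(1 : ℝ) - 0| := by
    refine intervalIntegral.norm_integral_le_of_norm_le_const fun t ht ↦ ?_
    rw [Set.uIoc_of_le zero_le_one] at ht
    have ht' : t ∈ Set.Icc (0 : ℝ) 1 := ⟨ht.1.le, ht.2⟩
    have h1 : |(1 - t) ^ 3| ≤ 1 := by
      rw [abs_of_nonneg (pow_nonneg (sub_nonneg.2 ht.2) 3)]
      exact pow_le_one₀ (sub_nonneg.2 ht.2) (by linarith [ht.1])
    have h2 : ‖iteratedFDeriv ℝ 4 f (x + t • y) (fun _ ↦ y)‖ ≤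
        (‖iteratedFDeriv ℝ 4 f x‖ + 1) * ‖y‖ ^ 4 := by
      refine (ContinuousMultilinearMap.le_opNorm _ _).trans ?_
      rw [Finset.prod_const, Finset.card_univ, Fintype.card_fin]
      gcongr
      exact (hball (hseg t ht')).1.le
    rw [norm_smul, Real.norm_eq_abs]
    exact (mul_le_of_le_one_left (norm_nonneg _) h1).trans h2
  rw [hrem, norm_smul, norm_pow, norm_norm]
  norm_num at hint ⊢
  have : 0 ≤ (‖iteratedFDeriv ℝ 4 f x‖ + 1) * ‖y‖ ^ 4 := by positivity
  linarith

/-- Orders of vanishing add up under a continuous bilinear map. -/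
theorem ContinuousLinearMap.isBigO_apply₂_pow {α E G : Type*} [NormedAddCommGroup E]
    [NormedSpace ℝ E] [NormedAddCommGroup G] [NormedSpace ℝ G] (q : E →L[ℝ] E →L[ℝ] G)
    {l : Filter α} {u v : α → E} {r : α → ℝ} {a b : ℕ}
    (hu : u =O[l] fun x ↦ r x ^ a) (hv : v =O[l] fun x ↦ r x ^ b) :
    (fun x ↦ q (u x) (v x)) =O[l] fun x ↦ r x ^ (a + b) := by
  refine (IsBigO.of_bound ‖q‖ (.of_forall fun x ↦ ?_) :
    (fun x ↦ q (u x) (v x)) =O[l] fun x ↦ ‖u x‖ * ‖v x‖).trans ?_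
  · simpa [mul_assoc] using q.le_opNorm₂ (u x) (v x)
  · simpa only [pow_add] using hu.norm_left.mul hv.norm_left

/-- A continuous trilinear map evaluated on the diagonal triples the order of vanishing. -/
theorem ContinuousMultilinearMap.isBigO_diag_three {α E G : Type*} [NormedAddCommGroup E]
    [NormedSpace ℝ E] [NormedAddCommGroup G] [NormedSpace ℝ G]
    (T : ContinuousMultilinearMap ℝ (fun _ : Fin 3 ↦ E) G) {l : Filter α} {u : α → E}
    {r : α → ℝ} (hu : u =O[l] fun x ↦ r x ^ 1) :
    (fun x ↦ T fun _ ↦ u x) =O[l] fun x ↦ r x ^ 3 := by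
  refine (IsBigO.of_bound ‖T‖ (.of_forall fun x ↦ ?_) :
    (fun x ↦ T fun _ ↦ u x) =O[l] fun x ↦ ‖u x‖ ^ 3).trans ?_
  · simpa using T.le_opNorm fun _ ↦ u x
  · simpa using hu.norm_left.pow 3

/-- Replacing the argument of a cubic form, of order one, by one that agrees with it to second
order changes its value only at fourth order. -/
theorem ContinuousMultilinearMap.isBigO_diag_three_sub {α E G : Type*} [NormedAddCommGroup E]
    [NormedSpace ℝ E] [NormedAddCommGroup G] [NormedSpace ℝ G]
    (T : ContinuousMultilinearMap ℝ (fun _ : Fin 3 ↦ E) G) {l : Filter α} {u v : α → E}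
    {r : α → ℝ} (hu : u =O[l] fun x ↦ r x ^ 1) (hv : v =O[l] fun x ↦ r x ^ 1)
    (huv : (fun x ↦ u x - v x) =O[l] fun x ↦ r x ^ 2) :
    (fun x ↦ (T fun _ ↦ u x) - T fun _ ↦ v x) =O[l] fun x ↦ r x ^ 4 := by
  refine (IsBigO.of_bound (‖T‖ * 3) (.of_forall fun x ↦ ?_) :
    (fun x ↦ (T fun _ ↦ u x) - T fun _ ↦ v x) =O[l]
      fun x ↦ (‖u x‖ + ‖v x‖) ^ 2 * ‖u x - v x‖).trans ?_
  · have h := T.norm_image_sub_le (fun _ ↦ u x) fun _ ↦ v x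
    have hsub : ((fun _ : Fin 3 ↦ u x) - fun _ ↦ v x) = fun _ ↦ u x - v x := rfl
    rw [hsub, pi_norm_const, pi_norm_const, pi_norm_const, Fintype.card_fin] at h
    refine h.trans ?_
    rw [Real.norm_of_nonneg (by positivity), ← mul_assoc]
    norm_num
    gcongr
    exact max_le_add_of_nonneg (norm_nonneg _) (norm_nonneg _)
  · refine (((hu.norm_left.add hv.norm_left).pow 2).mul huv.norm_left).congr_right fun x ↦ ?_
    ring

/-- Third-order series-reversion estimate: with `η₁ = M(Λ̃(υ) − Λ̃(0))`,
`η₂ = −(1/2) M D²Λ̃(0; η₁, η₁)` and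
`η₃ = −(1/6) M D³Λ̃(0; η₁³) − M D²Λ̃(0; η₁, η₂)`, one has `η₃ = O(‖υ‖³)` and
`‖η₁ + η₂ + η₃ − υ‖ ≤ C‖υ‖⁴` for small `υ ∈ W`. -/
theorem stmt12
    {B : Type*} [NormedAddCommGroup B] [NormedSpace ℝ B]
    {Y : Type*} [NormedAddCommGroup Y] [NormedSpace ℝ Y] [FiniteDimensional ℝ Y]
    (I : Set B) (hI : IsOpen I) (h0 : (0 : B) ∈ I)
    (Λ : B → Y) (hΛ : ContDiffOn ℝ 4 Λ I)
    (F : B →L[ℝ] Y) (hF : HasFDerivAt Λ F 0)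
    (W : Submodule ℝ B) (hinj : ∀ x ∈ W, F x = 0 → x = 0)
    (M : Y →L[ℝ] B) (hM : ∀ w ∈ W, M (F w) = w)
    (hMrange : ∀ y : Y, M y ∈ W) :
    ∃ C : ℝ, ∃ δ > (0 : ℝ), ∀ υ ∈ W, ‖υ‖ < δ → segment ℝ 0 υ ⊆ I →
      let η₁ := M (Λ υ - Λ 0)
      let η₂ := -((1 / 2 : ℝ) • M ((iteratedFDeriv ℝ 2 Λ 0) ![η₁, η₁]))
      let η₃ := -((1 / 6 : ℝ) • M ((iteratedFDeriv ℝ 3 Λ 0) ![η₁, η₁, η₁]))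
        - M ((iteratedFDeriv ℝ 2 Λ 0) ![η₁, η₂])
      ‖η₃‖ ≤ C * ‖υ‖ ^ 3 ∧
      ‖η₁ + η₂ + η₃ - υ‖ ≤ C * ‖υ‖ ^ 4 := by
  have : CompleteSpace Y := FiniteDimensional.complete ℝ Y
  have hC : ContDiffAt ℝ 4 Λ 0 := hΛ.contDiffAt (hI.mem_nhds h0)
  have hsymm : IsSymmSndFDerivAt ℝ Λ 0 :=
    hC.isSymmSndFDerivAt (by simpa using (by norm_num : (2 : WithTop ℕ∞) ≤ 4))
  set T := M.compContinuousMultilinearMap (iteratedFDeriv ℝ 3 Λ 0) with hT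
  set q : B →L[ℝ] B →L[ℝ] B :=
    (ContinuousLinearMap.compL ℝ B Y B M).comp (fderiv ℝ (fderiv ℝ Λ) 0)
  have hq_apply : ∀ u v, M (iteratedFDeriv ℝ 2 Λ 0 ![u, v]) = q u v := fun u v ↦ by
    rw [iteratedFDeriv_two_apply]; rfl
  have hT_apply : ∀ u, M (iteratedFDeriv ℝ 3 Λ 0 ![u, u, u]) = T fun _ ↦ u := fun u ↦ by
    rw [hT, ContinuousLinearMap.compContinuousMultilinearMap_coe, Function.comp_apply]
    congr 2
    ext i
    fin_cases i <;> rfl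
  have hq_symm : ∀ u v, q u v = q v u := fun u v ↦ congrArg M (hsymm u v)
  set l : Filter B := 𝓝[(W : Set B)] 0
  set η₁ : B → B := fun υ ↦ M (Λ υ - Λ 0)
  set R : B → B := fun υ ↦ η₁ υ - υ - (1 / 2 : ℝ) • q υ υ - (1 / 6 : ℝ) • T fun _ ↦ υ with hR
  have hRO : R =O[l] fun υ ↦ ‖υ‖ ^ 4 := by
    refine ((M.isBigO_comp _ _).trans (hC.taylor_three_isBigO.mono nhdsWithin_le_nhds)).congr'
      ?_ EventuallyEq.rfl
    filter_upwards [self_mem_nhdsWithin] with υ hυ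
    have h2 : M (iteratedFDeriv ℝ 2 Λ 0 fun _ ↦ υ) = q υ υ := by
      rw [← hq_apply]
      congr 2
      ext i
      fin_cases i <;> rfl
    have h3 : M (iteratedFDeriv ℝ 3 Λ 0 fun _ ↦ υ) = T fun _ ↦ υ := rfl
    rw [zero_add, hF.fderiv, map_sub, map_sub, map_sub, hM υ hυ, map_smul, map_smul, h2, h3]
  have pow_mono : ∀ {m n : ℕ}, n ≤ m → (fun υ : B ↦ ‖υ‖ ^ m) =O[l] fun υ ↦ ‖υ‖ ^ n :=
    fun {m n} h ↦ by
      have h1 : (fun υ : B ↦ ‖υ‖) =O[𝓝 0] fun _ ↦ (1 : ℝ) :=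
        (continuous_norm.tendsto (0 : B)).isBigO_one ℝ
      refine IsBigO.mono ?_ (nhdsWithin_le_nhds (s := (W : Set B)))
      simpa [← pow_add, Nat.sub_add_cancel h] using
        (h1.pow (m - n)).mul (isBigO_refl (fun υ : B ↦ ‖υ‖ ^ n) (𝓝 0))
  have hid : (fun υ : B ↦ υ) =O[l] fun υ ↦ ‖υ‖ ^ 1 := by
    simpa using (isBigO_refl (fun υ : B ↦ υ) l).norm_right
  have hTid := T.isBigO_diag_three hid
  have he : (fun υ ↦ η₁ υ - υ) =O[l] fun υ ↦ ‖υ‖ ^ 2 := by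
    refine ((((q.isBigO_apply₂_pow hid hid).const_smul_left (1 / 2 : ℝ)).add
      ((hTid.const_smul_left (1 / 6 : ℝ)).trans (pow_mono (by norm_num)))).add
      (hRO.trans (pow_mono (by norm_num)))).congr_left fun υ ↦ ?_
    simp only [hR, Pi.smul_apply]
    abel
  have h₁ : η₁ =O[l] fun υ ↦ ‖υ‖ ^ 1 :=
    ((he.trans (pow_mono (by norm_num))).add hid).congr_left fun υ ↦ sub_add_cancel _ _
  have hT₁ := T.isBigO_diag_three h₁
  have h₂ : (fun υ ↦ -((1 / 2 : ℝ) • q (η₁ υ) (η₁ υ))) =O[l] fun υ ↦ ‖υ‖ ^ 2 :=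
    ((q.isBigO_apply₂_pow h₁ h₁).const_smul_left (1 / 2 : ℝ)).neg_left
  set η₂ : B → B := fun υ ↦ -((1 / 2 : ℝ) • q (η₁ υ) (η₁ υ)) with hη₂
  have hg : (fun υ ↦ η₂ υ + (η₁ υ - υ)) =O[l] fun υ ↦ ‖υ‖ ^ 3 := by
    refine (((((q.isBigO_apply₂_pow he h₁).add
      (q.isBigO_apply₂_pow (a := 1) (b := 2) hid he)).const_smul_left (-(1 / 2) : ℝ)).add
      (hTid.const_smul_left (1 / 6 : ℝ))).add
      (hRO.trans (pow_mono (by norm_num)))).congr_left fun υ ↦ ?_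
    simp only [hR, hη₂, Pi.smul_apply, map_sub, sub_apply]
    module
  have h₃ : (fun υ ↦ -((1 / 6 : ℝ) • T fun _ ↦ η₁ υ) - q (η₁ υ) (η₂ υ)) =O[l]
      fun υ ↦ ‖υ‖ ^ 3 :=
    (hT₁.const_smul_left (1 / 6 : ℝ)).neg_left.sub (q.isBigO_apply₂_pow (a := 1) (b := 2) h₁ h₂)
  have hsum : (fun υ ↦ η₁ υ + η₂ υ + (-((1 / 6 : ℝ) • T fun _ ↦ η₁ υ) - q (η₁ υ) (η₂ υ)) - υ)
      =O[l] fun υ ↦ ‖υ‖ ^ 4 := by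
    refine (((((q.isBigO_apply₂_pow (a := 2) (b := 2) he he).const_smul_left (1 / 2 : ℝ)).sub
      (q.isBigO_apply₂_pow (a := 1) (b := 3) h₁ hg)).sub
      ((T.isBigO_diag_three_sub h₁ hid he).const_smul_left (1 / 6 : ℝ))).add
      hRO).congr_left fun υ ↦ ?_
    simp only [hR, Pi.smul_apply, map_sub, map_add, sub_apply,
      hq_symm υ (η₁ υ)]
    simp only [hη₂]
    module
  obtain ⟨C₃, hC₃⟩ := h₃.bound
  obtain ⟨C₄, hC₄⟩ := hsum.bound
  obtain ⟨δ, hδ, hball⟩ := Metric.eventually_nhds_iff.1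
    (eventually_nhdsWithin_iff.1 (hC₃.and hC₄))
  refine ⟨max C₃ C₄, δ, hδ, fun υ hυW hυ _ ↦ ?_⟩
  obtain ⟨hb₃, hb₄⟩ := hball (by simpa using hυ) hυW
  simp only [hq_apply, hT_apply]
  rw [norm_pow, norm_norm] at hb₃ hb₄
  exact ⟨hb₃.trans (by gcongr; exact le_max_left _ _),
    hb₄.trans (by gcongr; exact le_max_right _ _)⟩
end
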